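/- Under the multi-cluster game setup, let x ∈ ℝ^{n×q} have rows x_i^T (ordered by cluster), set x̄ = u^T x ∈ ℝ^{1×q}, and for each h let y^h ∈ ℝ^{n_h×q_h} satisfy (1/n_h) 1^T y^h = ȳ^h = (1/n_h) Σ_{i=1}^{n_h} (∇_{x^h} f_i^h(x_i))^T. With Y = blockdiag{y^1, …, y^H} ∈ ℝ^{n×q}, one has: ‖Y‖_F ≤ Σ_{h=1}^H ‖y^h − v^h ȳ^h‖_F + √H · δ_{F,u} · L_v · ‖x − 1 x̄‖_F^u + √H · L_v · ‖1 x̄ − 1 x*‖_F, where δ_{F,u} = max_i u_i^{-1/2}. -/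

import Mathlib

noncomputable section

/-- Indexing of agents / coordinates grouped into clusters: `ℝ^q = ℝ^{q_1} × ⋯ × ℝ^{q_H}`
is modelled as functions on `(h : Fin H) × Fin (qh h)`, and similarly the `n = ∑ n_h`
agents are indexed by `(h : Fin H) × Fin (nh h)` (ordered by cluster). -/
abbrev Clustered (H : ℕ) (d : Fin H → ℕ) := (h : Fin H) × Fin (d h)

/-- Replace the cluster-`h` block of `x` by `z`, i.e. form `(z, x^{-h})`. -/
def blockPatch {H : ℕ} {qh : Fin H → ℕ} (x : Clustered H qh → ℝ)
    (h : Fin H) (z : Fin (qh h) → ℝ) : Clustered H qh → ℝ :=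
  fun j => if hj : j.1 = h then z (hj ▸ j.2) else x j

/-- `g` is the partial gradient of `f` with respect to the cluster-`h` block at
the point `x`: the map `z ↦ f (z, x^{-h})` has derivative `w ↦ ∑ⱼ g j * w j` at `x^h`. -/
def HasBlockGradient {H : ℕ} {qh : Fin H → ℕ}
    (f : (Clustered H qh → ℝ) → ℝ) (h : Fin H)
    (g : Fin (qh h) → ℝ) (x : Clustered H qh → ℝ) : Prop :=
  HasFDerivAt (fun z : Fin (qh h) → ℝ => f (blockPatch x h z))
    (∑ j, g j • (ContinuousLinearMap.proj j : (Fin (qh h) → ℝ) →L[ℝ] ℝ))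
    (fun j => x ⟨h, j⟩)

/-- Frobenius norm of a real matrix. -/
def frobNorm {m q : Type*} [Fintype m] [Fintype q] (A : Matrix m q ℝ) : ℝ :=
  Real.sqrt (∑ i, ∑ j, (A i j) ^ 2)

/-- Weighted Frobenius norm `‖A‖_F^u = ‖diag(√u) A‖_F`. -/
def frobNormW {n q : Type*} [Fintype n] [Fintype q] [DecidableEq n]
    (w : n → ℝ) (A : Matrix n q ℝ) : ℝ :=
  frobNorm (Matrix.diagonal (fun i => Real.sqrt (w i)) * A)

/-- Weighted Frobenius norm `‖B‖_F^{v} = ‖diag(√v)⁻¹ B‖_F`. -/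
def frobNormWinv {n q : Type*} [Fintype n] [Fintype q] [DecidableEq n]
    (w : n → ℝ) (A : Matrix n q ℝ) : ℝ :=
  frobNorm (Matrix.diagonal (fun i => (Real.sqrt (w i))⁻¹) * A)

/-- Spectral norm of a square real matrix: operator norm on Euclidean space. -/
def specNorm {n : Type*} [Fintype n] [DecidableEq n] (A : Matrix n n ℝ) : ℝ :=
  ‖LinearMap.toContinuousLinearMap (Matrix.toEuclideanLin A)‖

/-- The matrix all of whose rows equal `w` (e.g. `1 uᵀ` or `1 x̄`). -/
def rowRep (N : Type*) {Q : Type*} (w : Q → ℝ) : Matrix N Q ℝ :=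
  Matrix.of fun _ j => w j

/-!
Split `Y` into the part with blocks `y^h - v^h ȳ^h` and the part with blocks `v^h ȳ^h`. The second
part is `diag(v)` times the block matrix whose rows are the cluster averages `ȳ^h`. Left
multiplication by `diag(v)` costs a factor `max v`, and averaging the rows of a matrix does not
increase its Frobenius norm. Since the cluster gradients at `x*` average to zero, `ȳ^h` is the
average of the increments `∇f_i^h(x_i) - ∇f_i^h(x*)`, so this part is at most `L_v ‖x - 1 x*‖_F`.
Finally insert `1 x̄` and pass to the weighted norm. The factor `√H` never arises; the stated bound
follows because `√H ≥ 1`.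
-/

open Matrix
open scoped BigOperators

section Frobenius

variable {m q q' : Type*} [Fintype m] [Fintype q] [Fintype q']

theorem frobNorm_nonneg (A : Matrix m q ℝ) : 0 ≤ frobNorm A :=
  Real.sqrt_nonneg _

theorem frobNormW_nonneg [DecidableEq m] (u : m → ℝ) (A : Matrix m q ℝ) : 0 ≤ frobNormW u A :=
  frobNorm_nonneg _

theorem frobNorm_sq (A : Matrix m q ℝ) : frobNorm A ^ 2 = ∑ i, ∑ j, A i j ^ 2 :=
  Real.sq_sqrt (by positivity)

open scoped Matrix.Norms.Frobenius in
theorem frobNorm_eq_norm (A : Matrix m q ℝ) : frobNorm A = ‖A‖ := by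
  simp [frobNorm, frobenius_norm_def, Real.sqrt_eq_rpow]

open scoped Matrix.Norms.Frobenius in
theorem frobNorm_add_le (A B : Matrix m q ℝ) : frobNorm (A + B) ≤ frobNorm A + frobNorm B := by
  simpa only [frobNorm_eq_norm] using norm_add_le A B

theorem frobNorm_le_mul_of_forall_row {A : Matrix m q ℝ} {B : Matrix m q' ℝ} {c : ℝ} (hc : 0 ≤ c)
    (hrow : ∀ i, √(∑ j, A i j ^ 2) ≤ c * √(∑ j, B i j ^ 2)) : frobNorm A ≤ c * frobNorm B := by
  refine Real.sqrt_le_iff.mpr ⟨mul_nonneg hc (frobNorm_nonneg B), ?_⟩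
  rw [mul_pow, frobNorm_sq, Finset.mul_sum]
  gcongr with i
  simpa only [mul_pow, Real.sq_sqrt (Finset.sum_nonneg fun _ _ => sq_nonneg _)] using
    (Real.sqrt_le_iff.mp (hrow i)).2

theorem frobNorm_diagonal_mul_le [DecidableEq m] (d : m → ℝ) (A : Matrix m q ℝ) :
    frobNorm (diagonal d * A) ≤ ‖d‖ * frobNorm A := by
  refine frobNorm_le_mul_of_forall_row (norm_nonneg d) fun i => ?_
  simp only [diagonal_mul, mul_pow, ← Finset.mul_sum, Real.sqrt_mul (sq_nonneg (d i)),
    Real.sqrt_sq_eq_abs]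
  gcongr
  exact norm_le_pi_norm d i

theorem frobNorm_le_norm_inv_sqrt_mul_frobNormW [DecidableEq m] {u : m → ℝ} (hu : ∀ i, 0 < u i)
    (A : Matrix m q ℝ) : frobNorm A ≤ ‖fun i => (√(u i))⁻¹‖ * frobNormW u A := by
  have hinv : (diagonal fun i => (√(u i))⁻¹) * diagonal (fun i => √(u i)) = 1 := by
    simp [diagonal_mul_diagonal, (Real.sqrt_pos.mpr (hu _)).ne']
  calc frobNorm A
      = frobNorm ((diagonal fun i => (√(u i))⁻¹) * (diagonal (fun i => √(u i)) * A)) := by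
        rw [← Matrix.mul_assoc, hinv, Matrix.one_mul]
    _ ≤ _ := frobNorm_diagonal_mul_le _ _

theorem frobNorm_rowRep_expect_le (A : Matrix m q ℝ) :
    frobNorm (rowRep m (𝔼 i, A i)) ≤ frobNorm A := by
  have hcol (j : q) : Fintype.card m * (𝔼 i, A i j) ^ 2 ≤ ∑ i, A i j ^ 2 := by
    cases isEmpty_or_nonempty m
    · simp
    calc Fintype.card m * (𝔼 i, A i j) ^ 2
        ≤ Fintype.card m * 𝔼 i, A i j ^ 2 := by
          gcongr
          simpa using Finset.expect_mul_sq_le_sq_mul_sq Finset.univ (fun i => A i j) 1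
      _ = ∑ i, A i j ^ 2 := Fintype.card_mul_expect _
  refine Real.sqrt_le_sqrt ?_
  rw [Finset.sum_comm, Finset.sum_comm (f := fun i j => A i j ^ 2)]
  refine Finset.sum_le_sum fun j _ => ?_
  simpa [rowRep, Finset.expect_apply _ A j] using hcol j

theorem frobNorm_rowRep_expect_le_of_sum_eq_zero {G : m → (q' → ℝ) → q → ℝ} {L : ℝ} (hL : 0 ≤ L)
    {z : q' → ℝ} (hlip : ∀ i a, √(∑ j, (G i a j - G i z j) ^ 2) ≤ L * √(∑ j, (a j - z j) ^ 2))
    (hz : ∑ i, G i z = 0) (X : Matrix m q' ℝ) :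
    frobNorm (rowRep m (𝔼 i, G i (X i))) ≤ L * frobNorm (X - rowRep m z) := by
  have hmean : 𝔼 i, G i (X i) = 𝔼 i, (G i (X i) - G i z) := by
    rw [Finset.expect_sub_distrib, Finset.expect_univ (f := fun i => G i z), hz, smul_zero,
      sub_zero]
  calc frobNorm (rowRep m (𝔼 i, G i (X i)))
      ≤ frobNorm (of fun i => G i (X i) - G i z) := by
        rw [hmean]
        exact frobNorm_rowRep_expect_le (of fun i => G i (X i) - G i z)
    _ ≤ L * frobNorm (X - rowRep m z) :=
        frobNorm_le_mul_of_forall_row hL fun i => hlip i (X i)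

end Frobenius

section BlockDiagonal

variable {ι : Type*} [DecidableEq ι] {N Q : ι → Type*}

theorem blockDiagonal'_vecMulVec [Fintype ι] [∀ h, Fintype (N h)] [∀ h, DecidableEq (N h)]
    (v : (Σ h, N h) → ℝ) (w : ∀ h, Q h → ℝ) :
    blockDiagonal' (fun h => vecMulVec (fun i => v ⟨h, i⟩) (w h)) =
      diagonal v * blockDiagonal' fun h => rowRep (N h) (w h) := by
  ext ⟨h, i⟩ ⟨k, j⟩
  rw [diagonal_mul]
  obtain rfl | hk := eq_or_ne h k
  · simp [blockDiagonal'_apply_eq, vecMulVec_apply, rowRep]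
  · simp [blockDiagonal'_apply_ne _ _ _ hk]

theorem of_dite_eq_blockDiagonal' (B : ∀ h, Matrix (N h) (Q h) ℝ) :
    (of fun (i : Σ h, N h) (j : Σ h, Q h) =>
      if hij : i.1 = j.1 then B i.1 i.2 (hij.symm ▸ j.2) else 0) = blockDiagonal' B := by
  ext ⟨h, i⟩ ⟨k, j⟩
  obtain rfl | hk := eq_or_ne h k
  · simp
  · simp [blockDiagonal'_apply_ne _ _ _ hk, hk]

variable [Fintype ι] [∀ h, Fintype (N h)] [∀ h, Fintype (Q h)]

theorem frobNorm_blockDiagonal'_sq (B : ∀ h, Matrix (N h) (Q h) ℝ) :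
    frobNorm (blockDiagonal' B) ^ 2 = ∑ h, frobNorm (B h) ^ 2 := by
  simp only [frobNorm_sq, Fintype.sum_sigma]
  refine Finset.sum_congr rfl fun h _ => Finset.sum_congr rfl fun i _ => ?_
  rw [Fintype.sum_eq_single h fun k hk => by simp [blockDiagonal'_apply_ne B _ _ hk.symm]]
  simp only [blockDiagonal'_apply_eq]

theorem frobNorm_blockDiagonal'_le_sum (B : ∀ h, Matrix (N h) (Q h) ℝ) :
    frobNorm (blockDiagonal' B) ≤ ∑ h, frobNorm (B h) := by
  refine le_of_sq_le_sq ?_ (Finset.sum_nonneg fun h _ => frobNorm_nonneg (B h))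
  rw [frobNorm_blockDiagonal'_sq]
  exact Finset.sum_sq_le_sq_sum_of_nonneg fun h _ => frobNorm_nonneg (B h)

theorem frobNorm_blockDiagonal'_le_mul_of_forall {R : Type*} [Fintype R]
    {B : ∀ h, Matrix (N h) (Q h) ℝ} {A : Matrix (Σ h, N h) R ℝ} {c : ℝ} (hc : 0 ≤ c)
    (hB : ∀ h, frobNorm (B h) ≤ c * frobNorm (A.submatrix (Sigma.mk h) id)) :
    frobNorm (blockDiagonal' B) ≤ c * frobNorm A := by
  refine le_of_sq_le_sq ?_ (mul_nonneg hc (frobNorm_nonneg A))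
  have hA : frobNorm A ^ 2 = ∑ h, frobNorm (A.submatrix (Sigma.mk h) id) ^ 2 := by
    simp only [frobNorm_sq, Fintype.sum_sigma, submatrix_apply, id_eq]
  rw [frobNorm_blockDiagonal'_sq, mul_pow, hA, Finset.mul_sum]
  gcongr with h
  simpa only [mul_pow] using pow_le_pow_left₀ (frobNorm_nonneg (B h)) (hB h) 2

end BlockDiagonal

theorem pi_norm_eq_sup'_of_nonneg {ι : Type*} [Fintype ι] (hι : (Finset.univ : Finset ι).Nonempty)
    {a : ι → ℝ} (ha : ∀ i, 0 ≤ a i) : ‖a‖ = Finset.univ.sup' hι a := by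
  have : Nonempty ι := Finset.univ_nonempty_iff.mp hι
  refine le_antisymm ((pi_norm_le_iff_of_nonempty a).mpr fun i => ?_)
    (Finset.sup'_le hι a fun i _ => (Real.le_norm_self _).trans (norm_le_pi_norm a i))
  rw [Real.norm_of_nonneg (ha i)]
  exact Finset.le_sup' a (Finset.mem_univ i)

theorem expect_fin_apply {n : ℕ} {q : Type*} (A : Fin n → q → ℝ) (j : q) :
    (𝔼 i, A i) j = (n : ℝ)⁻¹ * ∑ i, A i j := by
  rw [Finset.expect_apply, Fintype.expect_eq_sum_div_card, Fintype.card_fin, div_eq_inv_mul]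

theorem vecMulVec_expect_fin {n : ℕ} {m q : Type*} (a : m → ℝ) (A : Matrix (Fin n) q ℝ) :
    vecMulVec a (𝔼 i, A i) = of fun i j => a i * ((n : ℝ)⁻¹ * ∑ i', A i' j) := by
  ext i j
  rw [vecMulVec_apply, expect_fin_apply A, of_apply]

/-- `z` and `c` play the roles of `x*` and `x̄`. The bare norms are sup norms, so that the constants
are `δ_{F,u}` and `L_v`. -/
theorem stmt_13_general {ι : Type*} [Fintype ι] [DecidableEq ι] {N Q : ι → Type*}
    [∀ h, Fintype (N h)] [∀ h, DecidableEq (N h)] [∀ h, Fintype (Q h)]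
    {G : ∀ h, N h → ((Σ k, Q k) → ℝ) → Q h → ℝ} {L : ℝ} (hL : 0 ≤ L) {z : (Σ k, Q k) → ℝ}
    (hlip : ∀ h i a, √(∑ j, (G h i a j - G h i z j) ^ 2) ≤ L * √(∑ j, (a j - z j) ^ 2))
    (hz : ∀ h, ∑ i, G h i z = 0)
    {u : (Σ h, N h) → ℝ} (hu : ∀ p, 0 < u p) (v : (Σ h, N h) → ℝ)
    (x : Matrix (Σ h, N h) (Σ k, Q k) ℝ) (c : (Σ k, Q k) → ℝ)
    {y : ∀ h, Matrix (N h) (Q h) ℝ} (hy : ∀ h, 𝔼 i, y h i = 𝔼 i, G h i (x ⟨h, i⟩)) :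
    frobNorm (blockDiagonal' y) ≤
      ∑ h, frobNorm (y h - vecMulVec (fun i => v ⟨h, i⟩) (𝔼 i, y h i)) +
      ‖fun p => (√(u p))⁻¹‖ * (L * ‖v‖) * frobNormW u (x - rowRep _ c) +
      L * ‖v‖ * frobNorm (rowRep (Σ h, N h) c - rowRep _ z) := by
  set w := fun h => vecMulVec (fun i => v ⟨h, i⟩) (𝔼 i, y h i)
  have hsplit : frobNorm (blockDiagonal' y) ≤
      ∑ h, frobNorm (y h - w h) + frobNorm (blockDiagonal' w) := by
    calc frobNorm (blockDiagonal' y) = frobNorm (blockDiagonal' (y - w) + blockDiagonal' w) := by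
          rw [← blockDiagonal'_add, sub_add_cancel]
      _ ≤ frobNorm (blockDiagonal' (y - w)) + frobNorm (blockDiagonal' w) := frobNorm_add_le _ _
      _ ≤ _ := by gcongr; exact frobNorm_blockDiagonal'_le_sum (y - w)
  have hmean : frobNorm (blockDiagonal' fun h => rowRep (N h) (𝔼 i, y h i)) ≤
      L * frobNorm (x - rowRep _ z) := by
    refine frobNorm_blockDiagonal'_le_mul_of_forall hL fun h => ?_
    rw [hy]
    exact frobNorm_rowRep_expect_le_of_sum_eq_zero hL (hlip h) (hz h) (x.submatrix (Sigma.mk h) id)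
  have hdist : frobNorm (x - rowRep _ z) ≤
      ‖fun p => (√(u p))⁻¹‖ * frobNormW u (x - rowRep _ c) +
        frobNorm (rowRep (Σ h, N h) c - rowRep _ z) := by
    rw [← sub_add_sub_cancel x (rowRep _ c)]
    exact (frobNorm_add_le _ _).trans
      (by gcongr; exact frobNorm_le_norm_inv_sqrt_mul_frobNormW hu _)
  calc frobNorm (blockDiagonal' y)
      ≤ ∑ h, frobNorm (y h - w h) + frobNorm (blockDiagonal' w) := hsplit
    _ ≤ ∑ h, frobNorm (y h - w h) + ‖v‖ * (L * frobNorm (x - rowRep _ z)) := by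
        rw [blockDiagonal'_vecMulVec]
        grw [frobNorm_diagonal_mul_le, hmean]
    _ ≤ _ := by grw [hdist]; exact le_of_eq (by ring)

/-- Lemma 4, part 4.  Under the multi-cluster game setup, if the
column averages of `y^h` equal the averaged gradients of cluster `h` at the
rows of `x`, then for `Y = blockdiag{y^1, …, y^H}`:
`‖Y‖_F ≤ ∑ₕ ‖y^h − v^h ȳ^h‖_F + √H δ_{F,u} L_v ‖x − 1 x̄‖_F^u + √H L_v ‖1 x̄ − 1 x*‖_F`,
where `x̄ = uᵀ x`, `δ_{F,u} = maxᵢ uᵢ^{-1/2}` and `L_v = L·max_{i,h} v^h_i`. -/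
theorem stmt_13 (H : ℕ) (hH : 0 < H) (nh qh : Fin H → ℕ) (hnh : ∀ h, 0 < nh h)
    (f : (h : Fin H) → Fin (nh h) → (Clustered H qh → ℝ) → ℝ)
    (gradf : (h : Fin H) → (i : Fin (nh h)) → (Clustered H qh → ℝ) → Fin (qh h) → ℝ)
    (hconv : ∀ h i, ConvexOn ℝ Set.univ (f h i))
    (hsmooth : ∀ h i, ContDiff ℝ 1 (f h i))
    (hgrad : ∀ h i x, HasBlockGradient (f h i) h (gradf h i x) x)
    (L : ℝ) (hL : 0 < L)
    (hlip : ∀ h i x y, Real.sqrt (∑ jj, (gradf h i x jj - gradf h i y jj) ^ 2) ≤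
      L * Real.sqrt (∑ j, (x j - y j) ^ 2))
    (xstar : Clustered H qh → ℝ)
    (hstar : ∀ j : Clustered H qh, ∑ i, gradf j.1 i xstar j.2 = 0)
    (u : Clustered H nh → ℝ) (hu : ∀ i, 0 < u i) (husum : ∑ i, u i = 1)
    (v : (h : Fin H) → Fin (nh h) → ℝ) (hv : ∀ h i, 0 < v h i)
    (hvsum : ∀ h, ∑ i, v h i = 1)
    (x : Matrix (Clustered H nh) (Clustered H qh) ℝ)
    (y : (h : Fin H) → Matrix (Fin (nh h)) (Fin (qh h)) ℝ)
    (hybar : ∀ (h : Fin H) (jj : Fin (qh h)),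
      (nh h : ℝ)⁻¹ * ∑ i, y h i jj = (nh h : ℝ)⁻¹ * ∑ i, gradf h i (x ⟨h, i⟩) jj) :
    frobNorm (Matrix.of (fun (i : Clustered H nh) (j : Clustered H qh) =>
        if hij : i.1 = j.1 then y i.1 i.2 (hij.symm ▸ j.2) else 0)) ≤
      (∑ h, frobNorm (y h -
        Matrix.of (fun i jj => v h i * ((nh h : ℝ)⁻¹ * ∑ i', y h i' jj)))) +
      Real.sqrt H *
        (Finset.univ.sup'
          (Finset.univ_nonempty_iff.mpr ⟨⟨⟨0, hH⟩, ⟨0, hnh ⟨0, hH⟩⟩⟩⟩)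
          (fun i : Clustered H nh => (Real.sqrt (u i))⁻¹)) *
        (L * Finset.univ.sup'
          (Finset.univ_nonempty_iff.mpr ⟨⟨⟨0, hH⟩, ⟨0, hnh ⟨0, hH⟩⟩⟩⟩)
          (fun p : Clustered H nh => v p.1 p.2)) *
        frobNormW u (x - rowRep (Clustered H nh) (Matrix.vecMul u x)) +
      Real.sqrt H *
        (L * Finset.univ.sup'
          (Finset.univ_nonempty_iff.mpr ⟨⟨⟨0, hH⟩, ⟨0, hnh ⟨0, hH⟩⟩⟩⟩)
          (fun p : Clustered H nh => v p.1 p.2)) *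
        frobNorm (rowRep (Clustered H nh) (Matrix.vecMul u x) -
          rowRep (Clustered H nh) xstar) := by
  have hp : (Finset.univ : Finset (Clustered H nh)).Nonempty :=
    ⟨⟨⟨0, hH⟩, ⟨0, hnh ⟨0, hH⟩⟩⟩, Finset.mem_univ _⟩
  have hsqrt : 1 ≤ √(H : ℝ) := Real.one_le_sqrt.mpr (by exact_mod_cast hH)
  have hbound := stmt_13_general hL.le (fun h i a => hlip h i a xstar)
    (fun h => funext fun j => by simpa only [Finset.sum_apply, Pi.zero_apply] using hstar ⟨h, j⟩)
    hu (fun p => v p.1 p.2) x (u ᵥ* x) (y := y)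
    fun h => funext fun j => by rw [expect_fin_apply (y h), expect_fin_apply, hybar h j]
  simp only [vecMulVec_expect_fin] at hbound
  have hW := frobNormW_nonneg u (x - rowRep (Clustered H nh) (u ᵥ* x))
  have hF := frobNorm_nonneg (rowRep (Clustered H nh) (u ᵥ* x) - rowRep _ xstar)
  rw [of_dite_eq_blockDiagonal',
    ← pi_norm_eq_sup'_of_nonneg hp fun p => inv_nonneg.mpr (Real.sqrt_nonneg (u p)),
    ← pi_norm_eq_sup'_of_nonneg hp fun p => (hv p.1 p.2).le]
  refine hbound.trans ?_
  gcongr _ + ?_ * _ * _ + ?_ * _ <;> exact le_mul_of_one_le_left (by positivity) hsqrt
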